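/- A set of four n-qubit Pauli operators is contextual if and only if its elements can be labeled A, B, C, D so that A commutes with B, A commutes with C, B anticommutes with C, and D anticommutes with A (that is, if and only if its compatibility graph is, up to permutation of the operators, one of the three graphs on vertices {A,B,C,D} with edge sets {AB, AC}, {AB, AC, BD}, or {AB, AC, BD, CD}). -/

import Mathlib

/-! Two Pauli operators either commute or anticommute, and each squares to `1`.

If `A, B, C, D` have the stated commutation pattern, explicit trees with the same parities of
leaves and opposite roots exist in each of the possible cases for `D` against `B` and `C`
(`contextual_of_pattern`); when `D` commutes with both, this is the Mermin square.

Conversely, suppose no four elements of `S` have the pattern. Let `Z` consist of the elements of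
`S` commuting with all of `S`. Then commutation is an equivalence relation on `S \ Z`, so `S \ Z`
splits into cliques, with elements of different cliques anticommuting. Choose a representative
`r` of each clique, with `r = 1` for elements of `Z`. Every `s` with representative `r` is
`(s * r) * r`, and the operators `s * r` commute with all of `S` and with each other. By induction,
every node of a determining tree is labeled `g * r`, where `g` is a product of operators `s * r`
and `r` is `1` or a representative: commuting nodes `g * r` and `g' * r'` have `r = r'` or one of
`r, r'` equal to `1`. Hence the label is recovered from the product over the leaves `s` of
`(s * r, mark r)`, taken in a commutative group of exponent two. That product depends only on the
determining set, so two trees with the same determining set cannot have labels `A` and `-A`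
(`not_contextual`). -/

open Matrix

/-- Index type for `n` qubits: `Fin n → Fin 2` has cardinality `2^n`. -/
abbrev QubitIdx (n : ℕ) := Fin n → Fin 2

/-- `2^n × 2^n` complex matrices. -/
abbrev Mat (n : ℕ) := Matrix (QubitIdx n) (QubitIdx n) ℂ

/-- The four single-qubit Pauli matrices `I, X, Y, Z`. -/
noncomputable def pauliMat : Fin 4 → Matrix (Fin 2) (Fin 2) ℂ :=
  ![1, !![0, 1; 1, 0], !![0, -Complex.I; Complex.I, 0], !![1, 0; 0, -1]]

/-- The tensor product `P₁ ⊗ ⋯ ⊗ Pₙ` of single-qubit Pauli matrices. -/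
noncomputable def pauliTensor (n : ℕ) (f : Fin n → Fin 4) : Mat n :=
  fun i k => ∏ j, pauliMat (f j) (i j) (k j)

/-- An `n`-qubit Pauli operator: `ε • P₁ ⊗ ⋯ ⊗ Pₙ` with `ε ∈ {1, -1}`. -/
def IsPauli (n : ℕ) (M : Mat n) : Prop :=
  ∃ (ε : ℂ) (f : Fin n → Fin 4), (ε = 1 ∨ ε = -1) ∧ M = ε • pauliTensor n f

/-- Two operators anticommute. -/
def PAntiCommute {n : ℕ} (A B : Mat n) : Prop := A * B = -(B * A)

/-- Finite rooted trees whose nodes are labeled by `2^n × 2^n` matrices.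
A `leaf` has no children; a `node` has a (finite) list of children. -/
inductive PTree (n : ℕ) : Type
  | leaf : Mat n → PTree n
  | node : Mat n → List (PTree n) → PTree n

namespace PTree

variable {n : ℕ}

/-- The label of the root of the tree. -/
def label : PTree n → Mat n
  | leaf M => M
  | node M _ => M

mutual
/-- The multiset of leaf labels of the tree. -/
def leaves : PTree n → Multiset (Mat n)
  | .leaf M => {M}
  | .node _ cs => leavesList cs
/-- The multiset of leaf labels of a list of trees. -/
def leavesList : List (PTree n) → Multiset (Mat n)
  | [] => 0
  | c :: cs => c.leaves + leavesList cs
end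

mutual
/-- The list of leaf labels of the tree in depth-first (left-to-right) order. -/
def leafList : PTree n → List (Mat n)
  | .leaf M => [M]
  | .node _ cs => leafListList cs
/-- The list of leaf labels of a list of trees, in depth-first order. -/
def leafListList : List (PTree n) → List (Mat n)
  | [] => []
  | c :: cs => c.leafList ++ leafListList cs
end

mutual
/-- The multiset of all node labels of the tree. -/
def nodeLabels : PTree n → Multiset (Mat n)
  | .leaf M => {M}
  | .node M cs => M ::ₘ nodeLabelsList cs
/-- The multiset of all node labels of a list of trees. -/
def nodeLabelsList : List (PTree n) → Multiset (Mat n)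
  | [] => 0
  | c :: cs => c.nodeLabels + nodeLabelsList cs
end

/-- The multiset of labels of all nodes at depth ≥ 2, i.e. strictly below
the children of the root. -/
def deepLabels : PTree n → Multiset (Mat n)
  | .leaf _ => 0
  | .node _ cs => (cs.map fun c =>
      match c with
      | .leaf _ => (0 : Multiset (Mat n))
      | .node _ cs' => nodeLabelsList cs').sum

/-- A valid determining tree over a set `S`: every leaf is labeled by an
element of `S`, every node is labeled by a Pauli operator, and for every
internal node, the labels of its children pairwise commute and the label of
the node is the matrix product of the labels of its children. -/
inductive Valid (S : Set (Mat n)) : PTree n → Prop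
  | leaf {M : Mat n} : M ∈ S → Valid S (PTree.leaf M)
  | node {M : Mat n} {cs : List (PTree n)} :
      IsPauli n M →
      M = (cs.map label).prod →
      cs.Pairwise (fun a b => Commute a.label b.label) →
      (∀ c ∈ cs, Valid S c) →
      Valid S (PTree.node M cs)

/-- Every internal node of the tree has at most two children. -/
inductive Binary : PTree n → Prop
  | leaf (M : Mat n) : Binary (PTree.leaf M)
  | node (M : Mat n) (cs : List (PTree n)) :
      cs.length ≤ 2 → (∀ c ∈ cs, Binary c) → Binary (PTree.node M cs)

open scoped Classical in
/-- The determining set of a tree: the set of operators occurring with odd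
total multiplicity among its leaves. -/
noncomputable def detSet (τ : PTree n) : Set (Mat n) :=
  {M | Odd (τ.leaves.count M)}

end PTree

/-- `τ` is a determining tree for `A` over `S`. -/
def IsDetTree {n : ℕ} (S : Set (Mat n)) (A : Mat n) (τ : PTree n) : Prop :=
  PTree.Valid S τ ∧ τ.label = A

/-- A set `S` of Pauli operators is contextual if for some Pauli operator `A`
there are determining trees for `A` and for `-A` over `S` with identical
determining sets. -/
def Contextual (n : ℕ) (S : Set (Mat n)) : Prop :=
  ∃ (A : Mat n) (τ τ' : PTree n), IsPauli n A ∧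
    IsDetTree S A τ ∧ IsDetTree S (-A) τ' ∧ τ.detSet = τ'.detSet

/-! ### Algebra of Pauli operators -/

lemma pauliMat_sq (a : Fin 4) : pauliMat a * pauliMat a = 1 := by
  fin_cases a <;> ext i j <;> fin_cases i <;> fin_cases j <;>
    simp [pauliMat, Matrix.mul_apply, Fin.sum_univ_two]

/-- The single-qubit multiplication table: products are Pauli matrices up to a power of `i`. -/
lemma pauliMat_mul (a b : Fin 4) :
    ∃ (c : ℂ) (d : Fin 4), c ^ 4 = 1 ∧ pauliMat a * pauliMat b = c • pauliMat d := by
  have hI : Complex.I ^ 4 = 1 := Complex.I_pow_four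
  have hI' : (-Complex.I) ^ 4 = 1 := by rw [neg_pow, hI]; norm_num
  fin_cases a <;> fin_cases b
  · exact ⟨1, 0, by simp, by simp [pauliMat]⟩
  · exact ⟨1, 1, by simp, by simp [pauliMat]⟩
  · exact ⟨1, 2, by simp, by simp [pauliMat]⟩
  · exact ⟨1, 3, by simp, by simp [pauliMat]⟩
  · exact ⟨1, 1, by simp, by simp [pauliMat]⟩
  · exact ⟨1, 0, by simp, by simpa [pauliMat] using pauliMat_sq 1⟩
  · exact ⟨Complex.I, 3, hI, by simp [pauliMat]⟩
  · exact ⟨-Complex.I, 2, hI', by simp [pauliMat]⟩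
  · exact ⟨1, 2, by simp, by simp [pauliMat]⟩
  · exact ⟨-Complex.I, 3, hI', by simp [pauliMat]⟩
  · exact ⟨1, 0, by simp, by simpa [pauliMat] using pauliMat_sq 2⟩
  · exact ⟨Complex.I, 1, hI, by simp [pauliMat]⟩
  · exact ⟨1, 3, by simp, by simp [pauliMat]⟩
  · exact ⟨Complex.I, 2, hI, by simp [pauliMat]⟩
  · exact ⟨-Complex.I, 1, hI', by simp [pauliMat]⟩
  · exact ⟨1, 0, by simp, by simpa [pauliMat] using pauliMat_sq 3⟩

lemma pauliTensor_mul_apply {n : ℕ} (f g : Fin n → Fin 4) (i k : QubitIdx n) :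
    (pauliTensor n f * pauliTensor n g) i k =
      ∏ j, (pauliMat (f j) * pauliMat (g j)) (i j) (k j) := by
  simp only [Matrix.mul_apply, pauliTensor, Finset.prod_univ_sum, Fintype.piFinset_univ,
    Finset.prod_mul_distrib]

lemma pauliTensor_sq {n : ℕ} (f : Fin n → Fin 4) :
    pauliTensor n f * pauliTensor n f = 1 := by
  ext i k
  rw [pauliTensor_mul_apply]
  simp only [pauliMat_sq, Matrix.one_apply, Finset.prod_ite_zero, funext_iff]
  simp

lemma pauliTensor_mul {n : ℕ} (f g : Fin n → Fin 4) :
    ∃ (c : ℂ) (h : Fin n → Fin 4), c ^ 4 = 1 ∧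
      pauliTensor n f * pauliTensor n g = c • pauliTensor n h := by
  choose c d hc hd using pauliMat_mul
  refine ⟨∏ j, c (f j) (g j), fun j => d (f j) (g j), ?_, ?_⟩
  · rw [← Finset.prod_pow]
    exact Finset.prod_eq_one fun j _ => hc _ _
  · ext i k
    rw [pauliTensor_mul_apply]
    simp [hd, pauliTensor, Finset.prod_mul_distrib]

lemma IsPauli.sq {n : ℕ} {M : Mat n} (h : IsPauli n M) : M * M = 1 := by
  obtain ⟨ε, f, hε, rfl⟩ := h
  rcases hε with rfl | rfl <;> simp [pauliTensor_sq]

/-- A product of Pauli operators is a tensor of Pauli matrices up to a power of `i`. -/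
lemma IsPauli.mul {n : ℕ} {M N : Mat n} (hM : IsPauli n M) (hN : IsPauli n N) :
    ∃ (c : ℂ) (f : Fin n → Fin 4), c ^ 4 = 1 ∧ M * N = c • pauliTensor n f := by
  obtain ⟨ε, f, hε, rfl⟩ := hM
  obtain ⟨δ, g, hδ, rfl⟩ := hN
  obtain ⟨c, h, hc, hh⟩ := pauliTensor_mul f g
  refine ⟨ε * δ * c, h, ?_, ?_⟩
  · rcases hε with rfl | rfl <;> rcases hδ with rfl | rfl <;> simp [hc, (show Even 4 by decide).neg_pow]
  · rw [smul_mul_smul_comm, hh, smul_smul]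

lemma IsPauli.commute_or {n : ℕ} {M N : Mat n} (hM : IsPauli n M) (hN : IsPauli n N) :
    Commute M N ∨ PAntiCommute M N := by
  obtain ⟨c, f, hc, h⟩ := hM.mul hN
  have hf := pauliTensor_sq f
  -- `N * M` is the inverse of `M * N = c • P`, hence equals `c⁻¹ • P = c³ • P`.
  have h2 : N * M = (c ^ 3) • pauliTensor n f := by
    have h1 : (N * M) * (M * N) = 1 := by
      rw [mul_assoc, ← mul_assoc M M N, hM.sq, one_mul, hN.sq]
    have h3 : (M * N) * ((c ^ 3) • pauliTensor n f) = 1 := by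
      rw [h, smul_mul_smul_comm, hf, ← pow_succ', hc, one_smul]
    exact left_inv_eq_right_inv h1 h3
  have hc2 : c ^ 2 = 1 ∨ c ^ 2 = -1 := by
    exact mul_self_eq_one_iff.mp (by rw [← pow_add, hc])
  rcases hc2 with hc2 | hc2
  · left
    change M * N = N * M
    rw [h, h2, pow_succ, hc2, one_mul]
  · right
    change M * N = -(N * M)
    rw [h, h2, pow_succ, hc2]
    simp

lemma IsPauli.mul_of_commute {n : ℕ} {M N : Mat n} (hM : IsPauli n M) (hN : IsPauli n N)
    (hMN : Commute M N) : IsPauli n (M * N) := by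
  obtain ⟨c, f, -, h⟩ := hM.mul hN
  refine ⟨c, f, ?_, h⟩
  have h1 : (M * N) * (M * N) = 1 := by
    rw [hMN.symm.mul_mul_mul_comm, hM.sq, hN.sq, one_mul]
  rw [h, smul_mul_smul_comm, pauliTensor_sq] at h1
  have h2 := congrFun (congrFun h1 0) 0
  simp only [Matrix.smul_apply, Matrix.one_apply_eq, smul_eq_mul, mul_one] at h2
  exact mul_self_eq_one_iff.mp h2

lemma eq_zero_of_eq_neg {n : ℕ} {M : Mat n} (h : M = -M) : M = 0 := by
  ext i j
  exact self_eq_neg.mp (congrFun (congrFun h i) j)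

lemma IsPauli.anti_of_not {n : ℕ} {M N : Mat n} (hM : IsPauli n M) (hN : IsPauli n N)
    (h : ¬ Commute M N) : PAntiCommute M N := (hM.commute_or hN).resolve_left h

lemma PAntiCommute.symm {n : ℕ} {M N : Mat n} (h : PAntiCommute M N) : PAntiCommute N M := by
  unfold PAntiCommute at *
  rw [h, neg_neg]

lemma PAntiCommute.mul_left {n : ℕ} {M N P : Mat n} (h : PAntiCommute M P)
    (h' : PAntiCommute N P) : Commute (M * N) P := by
  change M * N * P = P * (M * N)
  rw [mul_assoc, show N * P = -(P * N) from h', mul_neg, ← mul_assoc, show M * P = -(P * M) from h, neg_mul, neg_neg, mul_assoc]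

/-! ### Contextuality of the three graphs -/

/-- A node with two children, labeled by the product of their labels. -/
noncomputable def PTree.pair {n : ℕ} (s t : PTree n) : PTree n :=
  .node (s.label * t.label) [s, t]

/-- `DT S M m`: some determining tree for the Pauli operator `M` over `S` has leaf multiset `m`. -/
def DT {n : ℕ} (S : Set (Mat n)) (M : Mat n) (m : Multiset (Mat n)) : Prop :=
  IsPauli n M ∧ ∃ τ : PTree n, IsDetTree S M τ ∧ τ.leaves = m

lemma DT.leaf {n : ℕ} {S : Set (Mat n)} {M : Mat n} (hM : IsPauli n M) (h : M ∈ S) :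
    DT S M {M} :=
  ⟨hM, .leaf M, ⟨.leaf h, rfl⟩, by simp [PTree.leaves]⟩

lemma DT.mul {n : ℕ} {S : Set (Mat n)} {M N : Mat n} {m k : Multiset (Mat n)}
    (hM : DT S M m) (hN : DT S N k) (h : Commute M N) : DT S (M * N) (m + k) := by
  obtain ⟨pM, s, ⟨vs, rfl⟩, rfl⟩ := hM
  obtain ⟨pN, t, ⟨vt, rfl⟩, rfl⟩ := hN
  have hp := pM.mul_of_commute pN h
  refine ⟨hp, s.pair t, ⟨.node hp (by simp) (by simpa using h) ?_, rfl⟩, ?_⟩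
  · simp [vs, vt]
  · simp [PTree.pair, PTree.leaves, PTree.leavesList]

/-- Opposite labels and leaf multisets that agree modulo two witness contextuality. -/
lemma DT.contextual {n : ℕ} {S : Set (Mat n)} {M N : Mat n} {m k d : Multiset (Mat n)}
    (hM : DT S M m) (hN : DT S N k) (h : N = -M) (hmk : k = m + 2 • d) : Contextual n S := by
  obtain ⟨pM, s, vs, rfl⟩ := hM
  obtain ⟨pN, t, vt, rfl⟩ := hN
  subst h
  refine ⟨M, s, t, pM, vs, vt, ?_⟩
  ext X
  simp [PTree.detSet, hmk, Nat.odd_add, parity_simps]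

/-- Rewriting rules that sort commuting letters `M` before `N` in a right-associated word. -/
lemma Commute.rules {n : ℕ} {M N : Mat n} (h : Commute M N) :
    N * M = M * N ∧ ∀ X : Mat n, N * (M * X) = M * (N * X) :=
  ⟨h.eq.symm, fun X => by rw [← mul_assoc, ← h.eq, mul_assoc]⟩

/-- Sorting rules for anticommuting letters; see `Commute.rules`. -/
lemma PAntiCommute.rules {n : ℕ} {M N : Mat n} (h : PAntiCommute M N) :
    N * M = -(M * N) ∧ ∀ X : Mat n, N * (M * X) = -(M * (N * X)) := by
  have h1 : N * M = -(M * N) := h.symm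
  exact ⟨h1, fun X => by rw [← mul_assoc, h1, neg_mul, mul_assoc]⟩

lemma IsPauli.rules {n : ℕ} {M : Mat n} (h : IsPauli n M) :
    M * M = 1 ∧ ∀ X : Mat n, M * (M * X) = X :=
  ⟨h.sq, fun X => by rw [← mul_assoc, h.sq, one_mul]⟩

/-- The commutation pattern makes any set of Pauli operators containing it contextual. -/
lemma contextual_of_pattern {n : ℕ} {S : Set (Mat n)} (hS : ∀ M ∈ S, IsPauli n M)
    {A B C D : Mat n} (hA : A ∈ S) (hB : B ∈ S) (hC : C ∈ S) (hD : D ∈ S)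
    (hAB : Commute A B) (hAC : Commute A C) (hBC : PAntiCommute B C) (hDA : PAntiCommute D A) :
    Contextual n S := by
  have a := DT.leaf (hS A hA) hA
  have b := DT.leaf (hS B hB) hB
  have c := DT.leaf (hS C hC) hC
  have d := DT.leaf (hS D hD) hD
  -- If `D` commutes with exactly one of `B`, `C`, say `B`, then `A * B` has the two-leaf tree,
  -- while `(A * C * D) * (B * D * C) = -(A * B)` uses each of `C`, `D` twice.
  have path : ∀ B ∈ S, ∀ C ∈ S, Commute A B → Commute A C → PAntiCommute B C →
      Commute D B → PAntiCommute D C → Contextual n S := by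
    intro B hB C hC hAB hAC hBC hDB hDC
    have b := DT.leaf (hS B hB) hB
    have c := DT.leaf (hS C hC) hC
    have t1 := (a.mul c hAC).mul d (hDA.symm.mul_left hDC.symm)
    have t2 := (b.mul d hDB.symm).mul c (hBC.mul_left hDC)
    have t := t1.mul t2 (by
      simp only [Commute, SemiconjBy, mul_assoc, hAB.rules, hAC.rules, hBC.rules,
        hDA.symm.rules, hDB.symm.rules, hDC.symm.rules, mul_neg, neg_mul, neg_neg,
        (hS C hC).rules, (hS D hD).rules, mul_one])
    refine DT.contextual (d := {C, D}) (a.mul b hAB) t ?_ ?_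
    · simp only [mul_assoc, hBC.rules, hDB.symm.rules, hDC.symm.rules, mul_neg, neg_neg,
        (hS C hC).rules, (hS D hD).rules, mul_one]
    · rw [show ({C, D} : Multiset (Mat n)) = {C} + {D} from rfl, two_smul]
      abel
  rcases (hS D hD).commute_or (hS B hB) with hDB | hDB <;>
    rcases (hS D hD).commute_or (hS C hC) with hDC | hDC
  · -- The Mermin square: `(A * B) * (C * D) = -((A * C) * (B * D))`.
    refine DT.contextual (d := 0) ((a.mul b hAB).mul (c.mul d hDC.symm) ?_)
      ((a.mul c hAC).mul (b.mul d hDB.symm) ?_) ?_ ?_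
    · simp only [Commute, SemiconjBy, mul_assoc, hAC.rules, hBC.rules,
        hDA.symm.rules, hDB.symm.rules, mul_neg, neg_neg]
    · simp only [Commute, SemiconjBy, mul_assoc, hAB.rules, hBC.rules,
        hDA.symm.rules, hDC.symm.rules, mul_neg]
    · simp only [mul_assoc, hBC.rules, mul_neg]
    · rw [smul_zero]; abel
  · exact path B hB C hC hAB hAC hBC hDB hDC
  · exact path C hC B hB hAC hAB hBC.symm hDC hDB
  · -- `A * B * D * C = -(A * C * D * B)`, since reversing three pairwise anticommuting
    -- factors costs a sign.
    refine DT.contextual (d := 0)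
      (((a.mul b hAB).mul d (hDA.symm.mul_left hDB.symm)).mul c ?_)
      (((a.mul c hAC).mul d (hDA.symm.mul_left hDC.symm)).mul b ?_) ?_ ?_
    · simp only [Commute, SemiconjBy, mul_assoc, hAC.rules, hBC.rules, hDC.symm.rules, mul_neg]
    · simp only [Commute, SemiconjBy, mul_assoc, hAB.rules, hBC.rules, hDB.symm.rules,
        mul_neg, neg_neg]
    · simp only [mul_assoc, hBC.rules, hDB.symm.rules, hDC.symm.rules, mul_neg, neg_neg]
    · rw [smul_zero]; abel

/-! ### Noncontextuality -/

section Noncontextual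

variable {n : ℕ} {S : Set (Mat n)} {K : Type*} [CommMonoid K]

/-- Induction along determining trees for an invariant relating labels to the product of a
commutative weight `h` over the leaves. -/
lemma tree_induction (h : Mat n → K) (Inv : Mat n → K → Prop) (h1 : Inv 1 1)
    (hmul : ∀ M N x y, Inv M x → Inv N y → Commute M N → Inv (M * N) (x * y))
    (hleaf : ∀ s ∈ S, Inv s (h s)) {τ : PTree n} (hτ : PTree.Valid S τ) :
    Inv τ.label (τ.leaves.map h).prod := by
  induction hτ with
  | leaf hM => simpa [PTree.leaves, PTree.label] using hleaf _ hM
  | @node M cs _ hprod hcomm _ ih =>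
    simp only [PTree.leaves, PTree.label, hprod]
    clear hprod
    induction cs with
    | nil => simpa [PTree.leavesList] using h1
    | cons c cs ihc =>
      rw [List.pairwise_cons] at hcomm
      simp only [List.map_cons, List.prod_cons, PTree.leavesList, Multiset.map_add,
        Multiset.prod_add]
      refine hmul _ _ _ _ (ih c (by simp))
        (ihc hcomm.2 (fun c hc => by simp_all) (fun c hc => ih c (by simp [hc]))) ?_
      refine Commute.list_prod_right _ _ fun x hx => ?_
      obtain ⟨y, hy, rfl⟩ := List.mem_map.mp hx
      exact hcomm.1 y hy

open scoped Classical in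
/-- A product of involutions in a commutative monoid depends only on the odd multiplicities. -/
lemma prod_eq_of_odd {α : Type*} (h : α → K) (m k : Multiset α) (hh : ∀ s, h s * h s = 1)
    (hmk : ∀ s, Odd (m.count s) ↔ Odd (k.count s)) : (m.map h).prod = (k.map h).prod := by
  have key : ∀ m : Multiset α,
      (m.map h).prod = ∏ s ∈ m.toFinset with Odd (m.count s), h s := by
    intro m
    rw [Finset.prod_multiset_map_count, Finset.prod_filter]
    refine Finset.prod_congr rfl fun s _ => ?_
    split_ifs with ho
    · obtain ⟨r, hr⟩ := ho
      rw [hr, pow_succ, pow_mul, sq, hh, one_pow, one_mul]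
    · obtain ⟨r, hr⟩ := Nat.not_odd_iff_even.mp ho
      rw [hr, ← two_mul, pow_mul, sq, hh, one_pow]
  rw [key m, key k]
  congr 1
  ext s
  have pos : ∀ m : Multiset α, Odd (m.count s) → s ∈ m := fun m hs =>
    Multiset.count_pos.mp hs.pos
  simp only [Finset.mem_filter, Multiset.mem_toFinset]
  exact ⟨fun ⟨_, h⟩ => ⟨pos k ((hmk s).mp h), (hmk s).mp h⟩,
    fun ⟨_, h⟩ => ⟨pos m ((hmk s).mpr h), (hmk s).mpr h⟩⟩

end Noncontextual

/-- A set of pairwise commuting elements of a monoid lies in a commutative submonoid. -/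
lemma exists_commMonoid {M : Type} [Monoid M] (U : Set M) (hU : ∀ a ∈ U, ∀ b ∈ U, a * b = b * a) :
    ∃ (K : Type) (_ : CommMonoid K) (i : K →* M), Function.Injective i ∧
      (∀ u ∈ U, ∃ k, i k = u) ∧ ∀ k, i k ∈ Submonoid.closure U :=
  ⟨Submonoid.closure U, { (inferInstance : Monoid (Submonoid.closure U)) with
      mul_comm := (Submonoid.isMulCommutative_closure M hU).is_comm.comm },
    (Submonoid.closure U).subtype,
    Subtype.val_injective, fun u hu => ⟨⟨u, Submonoid.subset_closure hu⟩, rfl⟩, fun k => k.2⟩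

open scoped Classical in
/-- The weight in `Mat n → ℤˣ` equal to `-1` exactly at `r`, so that products of
marks record the parity of the number of leaves in each clique; `mark 1` is trivial because `r = 1`
stands for the absence of a clique. -/
noncomputable def mark {n : ℕ} (r : Mat n) : Mat n → ℤˣ :=
  fun m => if m = r ∧ r ≠ 1 then -1 else 1

lemma mark_one {n : ℕ} : mark (1 : Mat n) = 1 := by
  ext m; simp [mark]

lemma mark_mul_self {n : ℕ} (r : Mat n) : mark r * mark r = 1 := by
  ext m; simp only [mark, Pi.mul_apply, Pi.one_apply]; split_ifs <;> simp

lemma mark_inj {n : ℕ} {r s : Mat n} (h : mark r = mark s) : r = s := by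
  have h1 := congrFun h r
  have h2 := congrFun h s
  simp only [mark] at h1 h2
  by_contra hrs
  have hsr : s ≠ r := fun h => hrs h.symm
  by_cases hr : r = 1
  · have : s ≠ 1 := fun h => hrs (hr.trans h.symm)
    simp_all
  · simp_all

/-- If commutation is transitive on the elements of `S` that do not commute with all of `S`,
then `S` is noncontextual. -/
lemma not_contextual {n : ℕ} {S : Set (Mat n)} (hS : ∀ M ∈ S, IsPauli n M)
    (hT : ∀ a ∈ S, ∀ b ∈ S, ∀ c ∈ S, ∀ d ∈ S, Commute a b → Commute a c → ¬ Commute d a →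
      Commute b c) : ¬ Contextual n S := by
  classical
  let Z : Mat n → Prop := fun s => ∀ t ∈ S, Commute s t
  -- A chosen representative of the clique of `s`, or `1` when `s` commutes with all of `S`.
  let rep : Mat n → Mat n := fun s =>
    if Z s then 1 else Classical.epsilon fun t => t ∈ S ∧ ¬ Z t ∧ Commute s t
  have rep_Z : ∀ s, Z s → rep s = 1 := fun s hs => if_pos hs
  have rep_spec : ∀ s ∈ S, ¬ Z s → rep s ∈ S ∧ ¬ Z (rep s) ∧ Commute s (rep s) := by
    intro s hs hZ
    have : rep s = Classical.epsilon fun t => t ∈ S ∧ ¬ Z t ∧ Commute s t := if_neg hZ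
    rw [this]
    exact Classical.epsilon_spec (p := fun t => t ∈ S ∧ ¬ Z t ∧ Commute s t)
      ⟨s, hs, hZ, Commute.refl s⟩
  have trans : ∀ a ∈ S, ∀ b ∈ S, ∀ c ∈ S, ¬ Z a → Commute a b → Commute a c → Commute b c := by
    intro a ha b hb c hc hZ hab hac
    obtain ⟨d, hd, hda⟩ : ∃ d ∈ S, ¬ Commute a d := by simpa [Z] using hZ
    exact hT a ha b hb c hc d hd hab hac fun h => hda h.symm
  have rep_eq : ∀ s ∈ S, ∀ t ∈ S, ¬ Z s → ¬ Z t → Commute s t → rep s = rep t := by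
    intro s hs t ht hZs hZt hst
    simp only [rep, if_neg hZs, if_neg hZt]
    congr 1
    ext u
    refine and_congr_right fun hu => and_congr_right fun _ => ?_
    exact ⟨fun h => trans s hs t ht u hu hZs hst h, fun h => trans t ht s hs u hu hZt hst.symm h⟩
  have rep_comm : ∀ s ∈ S, Commute s (rep s) := by
    intro s hs
    by_cases hZ : Z s
    · rw [rep_Z s hZ]; exact Commute.one_right s
    · exact (rep_spec s hs hZ).2.2
  have rep_sq : ∀ s ∈ S, rep s * rep s = 1 := by
    intro s hs
    by_cases hZ : Z s
    · rw [rep_Z s hZ, one_mul]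
    · exact (hS _ (rep_spec s hs hZ).1).sq
  -- Two commuting representatives are equal unless one of them is trivial.
  have rep_cases : ∀ s ∈ S, ∀ t ∈ S, Commute (rep s) (rep t) →
      rep s = 1 ∨ rep t = 1 ∨ rep s = rep t := by
    intro s hs t ht h
    by_cases hZs : Z s
    · exact .inl (rep_Z s hZs)
    by_cases hZt : Z t
    · exact .inr (.inl (rep_Z t hZt))
    obtain ⟨s1, s2, s3⟩ := rep_spec s hs hZs
    obtain ⟨t1, t2, t3⟩ := rep_spec t ht hZt
    have h1 : Commute s (rep t) := trans _ s1 s hs _ t1 s2 s3.symm h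
    exact .inr (.inr (rep_eq s hs t ht hZs hZt (trans _ t1 s hs t ht t2 h1.symm t3.symm)))
  have u_comm : ∀ s ∈ S, ∀ t ∈ S, Commute (s * rep s) t := by
    intro s hs t ht
    by_cases hZ : Z s
    · rw [rep_Z s hZ, mul_one]; exact hZ t ht
    obtain ⟨r1, r2, r3⟩ := rep_spec s hs hZ
    by_cases hst : Commute s t
    · exact hst.mul_left (trans s hs _ r1 t ht hZ r3 hst)
    · have hrt : ¬ Commute (rep s) t := fun h => hst (trans _ r1 s hs t ht r2 r3.symm h)
      exact ((hS s hs).anti_of_not (hS t ht) hst).mul_left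
        ((hS _ r1).anti_of_not (hS t ht) hrt)
  have comm_rep : ∀ g : Mat n, (∀ t ∈ S, Commute g t) → ∀ s ∈ S, Commute g (rep s) := by
    intro g hg s hs
    by_cases hZ : Z s
    · rw [rep_Z s hZ]; exact Commute.one_right g
    · exact hg _ (rep_spec s hs hZ).1
  obtain ⟨K, _, i, hi, hiU, hiK⟩ := exists_commMonoid ((fun s => s * rep s) '' S) (by
    rintro _ ⟨s, hs, rfl⟩ _ ⟨t, ht, rfl⟩
    exact ((u_comm s hs t ht).mul_right (comm_rep _ (u_comm s hs) t ht)).eq)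
  have i_spec : ∀ k, (∀ t ∈ S, Commute (i k) t) ∧ i k * i k = 1 := by
    intro k
    have key : ∀ g ∈ Submonoid.closure ((fun s => s * rep s) '' S),
        (∀ t ∈ S, Commute g t) ∧ g * g = 1 ∧ ∀ z, (∀ t ∈ S, Commute z t) → Commute z g := by
      intro g hg
      induction hg using Submonoid.closure_induction with
      | mem g hg =>
        obtain ⟨s, hs, rfl⟩ := hg
        refine ⟨u_comm s hs, ?_, fun z hz => (hz s hs).mul_right (comm_rep z hz s hs)⟩
        change s * rep s * (s * rep s) = 1
        rw [(rep_comm s hs).symm.mul_mul_mul_comm, (hS s hs).sq, rep_sq s hs, one_mul]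
      | one => exact ⟨fun t _ => Commute.one_left t, one_mul 1, fun z _ => Commute.one_right z⟩
      | mul x y _ _ hx hy =>
        refine ⟨fun t ht => (hx.1 t ht).mul_left (hy.1 t ht), ?_,
          fun z hz => (hx.2.2 z hz).mul_right (hy.2.2 z hz)⟩
        rw [(hx.2.2 y hy.1).mul_mul_mul_comm, hx.2.1, hy.2.1, one_mul]
    exact ⟨(key _ (hiK k)).1, (key _ (hiK k)).2.1⟩
  have hk : ∀ s : Mat n, ∃ k, s ∈ S → i k = s * rep s := by
    intro s
    by_cases hs : s ∈ S
    · obtain ⟨k, hk⟩ := hiU _ ⟨s, hs, rfl⟩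
      exact ⟨k, fun _ => hk⟩
    · exact ⟨1, fun h => absurd h hs⟩
  choose k hk using hk
  have k_sq : ∀ x : K, x * x = 1 := fun x => hi (by rw [map_mul, (i_spec x).2, map_one])
  let h : Mat n → K × (Mat n → ℤˣ) := fun s => (k s, mark (rep s))
  let R : Set (Mat n) := {r | r = 1 ∨ ∃ s ∈ S, rep s = r}
  have R_sq : ∀ r ∈ R, r * r = 1 := by
    rintro _ (rfl | ⟨s, hs, rfl⟩)
    · exact one_mul 1
    · exact rep_sq s hs
  have R_comm : ∀ x : K, ∀ r ∈ R, Commute (i x) r := by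
    rintro x _ (rfl | ⟨s, hs, rfl⟩)
    · exact Commute.one_right _
    · exact comm_rep _ (i_spec x).1 s hs
  have R_cases : ∀ r ∈ R, ∀ r' ∈ R, Commute r r' → r = 1 ∨ r' = 1 ∨ r = r' := by
    rintro _ (rfl | ⟨s, hs, rfl⟩) _ (rfl | ⟨t, ht, rfl⟩) hc
    · exact .inl rfl
    · exact .inl rfl
    · exact .inr (.inl rfl)
    · exact rep_cases s hs t ht hc
  let Inv : Mat n → K × (Mat n → ℤˣ) → Prop := fun M x =>
    ∃ r ∈ R, x.2 = mark r ∧ M = i x.1 * r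
  have Inv_mul : ∀ M N x y, Inv M x → Inv N y → Commute M N → Inv (M * N) (x * y) := by
    rintro M N ⟨x, x'⟩ ⟨y, y'⟩ ⟨r, hr, h1, rfl⟩ ⟨s, hs, h2, rfl⟩ hc
    simp only at h1 h2 hc ⊢
    subst h1 h2
    have e1 : i x * r * (i y * s) = i (x * y) * (r * s) := by
      rw [(R_comm y r hr).symm.mul_mul_mul_comm, map_mul]
    have e2 : i y * s * (i x * r) = i (x * y) * (s * r) := by
      rw [(R_comm x s hs).symm.mul_mul_mul_comm, ← map_mul, mul_comm y x]
    have hrs : Commute r s := by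
      have e3 : i (x * y) * (r * s) = i (x * y) * (s * r) := by rw [← e1, ← e2, hc.eq]
      have e4 := congrArg (i (x * y) * ·) e3
      simp only [← mul_assoc, (i_spec (x * y)).2, one_mul] at e4
      exact e4
    simp only [Inv, Prod.mk_mul_mk, e1]
    rcases R_cases r hr s hs hrs with rfl | rfl | rfl
    · exact ⟨s, hs, by rw [mark_one, one_mul], by rw [one_mul]⟩
    · exact ⟨r, hr, by rw [mark_one, mul_one], by rw [mul_one]⟩
    · exact ⟨1, .inl rfl, by rw [mark_mul_self, mark_one], by rw [R_sq r hr]⟩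
  have Inv_leaf : ∀ s ∈ S, Inv s (h s) := fun s hs =>
    ⟨rep s, .inr ⟨s, hs, rfl⟩, rfl, by simp only [h, hk s hs, mul_assoc, rep_sq s hs, mul_one]⟩
  have Inv_one : Inv 1 1 := ⟨1, .inl rfl, by simp [mark_one], by simp⟩
  rintro ⟨A, τ, τ', hA, ⟨hτ, lτ⟩, ⟨hτ', lτ'⟩, hdet⟩
  have i1 := tree_induction h Inv Inv_one Inv_mul Inv_leaf hτ
  have i2 := tree_induction h Inv Inv_one Inv_mul Inv_leaf hτ'
  have h_sq : ∀ s, h s * h s = 1 := fun s => Prod.ext (k_sq _) (mark_mul_self _)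
  have hprod : (τ'.leaves.map h).prod = (τ.leaves.map h).prod :=
    prod_eq_of_odd h _ _ h_sq fun s => by
      have := Set.ext_iff.mp hdet s
      simp only [PTree.detSet, Set.mem_ofPred_eq] at this
      convert this.symm
  rw [hprod, lτ'] at i2
  rw [lτ] at i1
  obtain ⟨r, _, m1, e1⟩ := i1
  obtain ⟨s, _, m2, e2⟩ := i2
  rw [← mark_inj (m1.symm.trans m2), ← e1] at e2
  have hA0 : A = 0 := eq_zero_of_eq_neg e2.symm
  have := hA.sq
  rw [hA0, zero_mul] at this
  exact zero_ne_one this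

/-- A set of four Pauli operators is contextual iff its elements
can be labeled `A', B', C', D'` so that `A'` commutes with `B'`, `A'` commutes
with `C'`, `B'` anticommutes with `C'`, and `D'` anticommutes with `A'`. -/
theorem four_pauli_contextual_iff {n : ℕ} (A B C D : Mat n)
    (hA : IsPauli n A) (hB : IsPauli n B) (hC : IsPauli n C) (hD : IsPauli n D)
    (hAB : A ≠ B) (hAC : A ≠ C) (hAD : A ≠ D)
    (hBC : B ≠ C) (hBD : B ≠ D) (hCD : C ≠ D) :
    Contextual n ({A, B, C, D} : Set (Mat n)) ↔
      ∃ A' B' C' D' : Mat n,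
        ({A', B', C', D'} : Set (Mat n)) = ({A, B, C, D} : Set (Mat n)) ∧
        Commute A' B' ∧ Commute A' C' ∧ PAntiCommute B' C' ∧ PAntiCommute D' A' := by
  have hS : ∀ M ∈ ({A, B, C, D} : Set (Mat n)), IsPauli n M := by
    rintro M (rfl | rfl | rfl | rfl) <;> assumption
  constructor
  · intro hcon
    by_contra hno
    refine not_contextual hS (fun a ha b hb c hc d hd hab hac hda => ?_) hcon
    by_contra hbc
    refine hno ⟨a, b, c, d, ?_, hab, hac, (hS b hb).anti_of_not (hS c hc) hbc,
      (hS d hd).anti_of_not (hS a ha) hda⟩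
    classical
    -- The commutation pattern forces `a, b, c, d` to be distinct, so they exhaust the four.
    have n1 : a ≠ b := by rintro rfl; exact hbc hac
    have n2 : a ≠ c := by rintro rfl; exact hbc hab.symm
    have n3 : a ≠ d := by rintro rfl; exact hda (Commute.refl _)
    have n4 : b ≠ c := by rintro rfl; exact hbc (Commute.refl _)
    have n5 : b ≠ d := by rintro rfl; exact hda hab.symm
    have n6 : c ≠ d := by rintro rfl; exact hda hac.symm
    have key : ({a, b, c, d} : Finset (Mat n)) = {A, B, C, D} := by
      refine Finset.eq_of_subset_of_card_le ?_ ?_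
      · intro x hx
        simp only [Finset.mem_insert, Finset.mem_singleton] at hx ⊢
        rcases hx with rfl | rfl | rfl | rfl <;> assumption
      · have h4 : ({a, b, c, d} : Finset (Mat n)).card = 4 := by
          simp [Finset.card_insert_of_notMem, *]
        rw [h4]
        exact Finset.card_le_four
    have := congrArg (fun s : Finset (Mat n) => (s : Set (Mat n))) key
    simpa using this
  · rintro ⟨a, b, c, d, hset, hab, hac, hbc, hda⟩
    rw [← hset] at hS ⊢
    exact contextual_of_pattern hS (by simp) (by simp) (by simp) (by simp) hab hac hbc hda
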